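/- arXiv:1812.09952 — 5 statements merged into one kernel-verified Lean document; each statement's English description precedes it below -/
import Mathlib

section
/- Let n ≥ 1, p : Fin n → ℝ with 0 ≤ p i ≤ 1 for all i, and c : Fin n → ℝ. Let μ_p be the product probability measure on Fin n → Bool whose i-th marginal assigns probability p i to true and 1 - p i to false. Define the cumulative reward of an outcome ω : Fin n → Bool as R(ω) = ∑_{i=0}^{n-1} c i · (indicator of the event that ω j = false for all j < i). Then ∫ R dμ_p = ∑_{i=0}^{n-1} (∏_{j<i} (1 - p j)) · c i, i.e., it equals c 0 + ∑_{i=1}^{n-1} (∏_{j<i}(1 - p j)) · c i. (Expected cost c_SEQ and expected execution time t_SEQ of the SEQ pattern in Theorem 3, taking c i to be the cost, respectively the execution time, of service i.) -/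
/-! The expectation is linear, so it suffices to know the probability that all services `j < i`
fail. The indicator of that event is a product of functions of one coordinate each
(`prod_failure_factor`), so Fubini for `Measure.pi` turns its integral into a product of
Bernoulli expectations (`integral_prod_failure_factor`): `1 - p j` for `j < i`, and the total
mass `1` for every other coordinate. -/

open MeasureTheory

/-- The Bernoulli measure on `Bool` assigning probability `a` to `true` and
`1 - a` to `false`. -/
noncomputable def bern (a : ℝ) : Measure Bool :=
  ENNReal.ofReal a • Measure.dirac true + ENNReal.ofReal (1 - a) • Measure.dirac false

instance (a : ℝ) : IsFiniteMeasure (bern a) := by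
  constructor
  rw [bern, Measure.add_apply, Measure.smul_apply, Measure.smul_apply]
  simp only [measure_univ, smul_eq_mul, mul_one]
  exact ENNReal.add_lt_top.mpr ⟨ENNReal.ofReal_lt_top, ENNReal.ofReal_lt_top⟩

/-- Expectation of a real function of a single Bernoulli trial. -/
lemma integral_bern {a : ℝ} (h0 : 0 ≤ a) (h1 : a ≤ 1) (f : Bool → ℝ) :
    ∫ b, f b ∂(bern a) = a * f true + (1 - a) * f false := by
  rw [bern, integral_add_measure
    ((integrable_dirac (by simp)).smul_measure ENNReal.ofReal_ne_top)
    ((integrable_dirac (by simp)).smul_measure ENNReal.ofReal_ne_top)]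
  simp [integral_smul_measure, ENNReal.toReal_ofReal, h0, h1]

/-- The indicator that all trials in a set `s` fail is the product over all coordinates of a
one-variable factor, which is constantly `1` off `s`. -/
lemma prod_failure_factor {n : ℕ} (s : Finset (Fin n)) (ω : Fin n → Bool)
    [Decidable (∀ j ∈ s, ω j = false)] :
    (∏ j, if j ∈ s ∧ ω j = true then (0 : ℝ) else 1) =
      if ∀ j ∈ s, ω j = false then 1 else 0 := by
  split_ifs with h
  · refine Finset.prod_eq_one fun j _ => if_neg ?_
    rintro ⟨hj, ht⟩
    simp [h j hj] at ht
  · push Not at h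
    obtain ⟨j, hj, ht⟩ := h
    exact Finset.prod_eq_zero (Finset.mem_univ j) (if_pos ⟨hj, by simpa using ht⟩)

/-- By independence, all trials in `s` fail with probability `∏ j ∈ s, (1 - p j)`. -/
lemma integral_prod_failure_factor {n : ℕ} (p : Fin n → ℝ) (h0 : ∀ i, 0 ≤ p i)
    (h1 : ∀ i, p i ≤ 1) (s : Finset (Fin n)) :
    ∫ ω : Fin n → Bool, (∏ j, if j ∈ s ∧ ω j = true then (0 : ℝ) else 1)
      ∂(Measure.pi fun i : Fin n => bern (p i)) = ∏ j ∈ s, (1 - p j) := by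
  rw [integral_fintype_prod_eq_prod (μ := fun i : Fin n => bern (p i))
    (fun j (b : Bool) => if j ∈ s ∧ b = true then (0 : ℝ) else 1)]
  simp_rw [integral_bern (h0 _) (h1 _)]
  rw [← Finset.prod_subset (Finset.subset_univ s)]
  · exact Finset.prod_congr rfl fun j hj => by simp [hj]
  · intro j _ hj
    simp [hj]

open scoped Classical in
/-- Expected cost/execution time of the SEQ pattern (Theorem 3): service `i` earns
reward `c i` iff all services `j < i` have failed, so the expected cumulative reward
under independent Bernoulli(`p i`) successes is `∑ i, (∏ j < i, (1 - p j)) * c i`. -/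
theorem seq_expected_reward (n : ℕ) (hn : 1 ≤ n) (p : Fin n → ℝ)
    (h0 : ∀ i, 0 ≤ p i) (h1 : ∀ i, p i ≤ 1) (c : Fin n → ℝ) :
    ∫ ω : Fin n → Bool,
        (∑ i : Fin n, if ∀ j < i, ω j = false then c i else 0)
        ∂(Measure.pi fun i : Fin n => bern (p i))
      = ∑ i : Fin n, (∏ j ∈ Finset.Iio i, (1 - p j)) * c i := by
  have key (i : Fin n) (ω : Fin n → Bool) :
      (if ∀ j < i, ω j = false then c i else 0) =
        (∏ j, if j ∈ Finset.Iio i ∧ ω j = true then (0 : ℝ) else 1) * c i := by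
    rw [prod_failure_factor]
    simp only [Finset.mem_Iio, ite_mul, one_mul, zero_mul]
  rw [integral_finsetSum _ fun i _ => Integrable.of_finite]
  refine Finset.sum_congr rfl fun i _ => ?_
  simp_rw [key i]
  rw [integral_mul_const, integral_prod_failure_factor p h0 h1]
end

section
/- For all real numbers q and r with 0 ≤ q ≤ 1 and 0 ≤ r < 1, ∑'_{k : ℕ} (k+1) · ( ((1-q)·r)^k · q + (1-q)^{k+1} · r^k · (1-r) ) = 1 / (1 - (1-q)·r). (The expected number of rounds executed by the retry process is 1/(1-(1-q)r); multiplying by the per-round cost c, respectively per-round time t, gives the expressions c_SEQ_R = c_SEQ/(1-(1-p_SEQ)r) and t_SEQ_R = t_SEQ/(1-(1-p_SEQ)r) of Theorem 3, and likewise for the PAR_R and PROB_R patterns and for equation (2) in the paper's proof.) -/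
/-! With `x = (1 - q) * r`, the probability of executing exactly `k + 1` rounds is
`x ^ k * (1 - x)`, because `q + (1 - q) * (1 - r) = 1 - x`. So the number of rounds is geometric,
and the claim follows from `∑ (k + 1) * x ^ k = 1 / (1 - x) ^ 2`, valid since `0 ≤ x ≤ r < 1`. -/

/-- The expected number of rounds executed by the retry process is
`1 / (1 - (1-q)r)`: the process executes exactly `k+1` rounds with probability
`((1-q)r)^k q + (1-q)^(k+1) r^k (1-r)`. -/
theorem retry_process_expected_rounds (q r : ℝ)
    (hq0 : 0 ≤ q) (hq1 : q ≤ 1) (hr0 : 0 ≤ r) (hr1 : r < 1) :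
    ∑' k : ℕ, (k + 1 : ℝ) * (((1 - q) * r) ^ k * q + (1 - q) ^ (k + 1) * r ^ k * (1 - r))
      = 1 / (1 - (1 - q) * r) := by
  have hterm (k : ℕ) :
      (k + 1 : ℝ) * (((1 - q) * r) ^ k * q + (1 - q) ^ (k + 1) * r ^ k * (1 - r))
        = ((k + 1).choose 1 * ((1 - q) * r) ^ k) * (1 - (1 - q) * r) := by
    rw [Nat.choose_one_right, mul_pow]
    push_cast
    ring
  have hx0 : 0 ≤ (1 - q) * r := mul_nonneg (by linarith) hr0
  have hx1 : (1 - q) * r < 1 := by nlinarith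
  have hne : 1 - (1 - q) * r ≠ 0 := by linarith
  have hnorm : ‖(1 - q) * r‖ < 1 := by rwa [Real.norm_of_nonneg hx0]
  simp_rw [hterm]
  rw [tsum_mul_right, tsum_choose_mul_geometric_of_norm_lt_one 1 hnorm]
  field_simp
end

section
/- Let m ≥ 1, n : Fin m → ℕ with n i ≥ 1 for all i, and p, p_VM ∈ ℝ with 0 ≤ p ≤ 1 and 0 ≤ p_VM ≤ 1. Consider the index type ι = Σ (i : Fin m), Fin (n i), let μ be the product probability measure on ι → Bool all of whose marginals assign probability p_VM to true, let δ₀ be the Dirac measure at the all-false function, and let ν = p • μ + (1-p) • δ₀. For ω : ι → Bool and i : Fin m, let count_i(ω) be the number of k : Fin (n i) with ω ⟨i,k⟩ = true. Let b : Fin m → Fin 3 encode a class for each tier (b i = 0 meaning count_i = 0, b i = 1 meaning count_i = 1, b i = 2 meaning count_i ≥ 2), and suppose b i ≠ 0 for at least one i. Then ν {ω | ∀ i, count_i(ω) is in class b i} = p · ∏_{i} f(b i, n i), where f(0,n) = (1-p_VM)^n, f(1,n) = n·p_VM·(1-p_VM)^{n-1}, and f(2,n) = 1 - f(0,n) - f(1,n).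 (The probabilities p_{b₁,…,b_m} with some b_i ≠ 0 of the VIRTUALIZED server pattern in Theorem 4.) -/
/-!
The set in question is a product event over the tiers. Currying `Σ i, Fin (n i) → Bool` turns the
product measure into a product over the tiers of product measures on `Fin (n i) → Bool`
(`pi_bern_tiers`), so its `μ`-measure factors. Within one tier the count is binomial
(`pi_bern_real_count`: all configurations with `c` survivors have mass `q ^ c * (1 - q) ^ (n - c)`,
and there are `n.choose c` of them), which gives `fProb` for the classes `0` and `1` and, by
complementation, for the class `2+`. The Dirac part contributes nothing: the all-false
configuration has count `0` in every tier, whereas some tier is required to be in a nonzero class.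
-/

open MeasureTheory

/-- Whether a count `c` of operational instances falls in the class encoded by
`b : Fin 3` (`b = 0` means `c = 0`, `b = 1` means `c = 1`, `b = 2` means `c ≥ 2`). -/
def inClass (b : Fin 3) (c : ℕ) : Prop :=
  if b = 0 then c = 0 else if b = 1 then c = 1 else 2 ≤ c

/-- The probability `f(b, n)` that the number of survivors among `n` independent
Bernoulli(`pVM`) instances falls in class `b`. -/
noncomputable def fProb (pVM : ℝ) (b : Fin 3) (n : ℕ) : ℝ :=
  if b = 0 then (1 - pVM) ^ n
  else if b = 1 then (n : ℝ) * pVM * (1 - pVM) ^ (n - 1)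
  else 1 - (1 - pVM) ^ n - (n : ℝ) * pVM * (1 - pVM) ^ (n - 1)

lemma isProbabilityMeasure_bern {q : ℝ} (h0 : 0 ≤ q) (h1 : q ≤ 1) :
    IsProbabilityMeasure (bern q) := by
  constructor
  simp only [bern, Measure.add_apply, Measure.smul_apply, measure_univ, smul_eq_mul, mul_one]
  rw [← ENNReal.ofReal_add h0 (by linarith)]
  simp

lemma bern_real_singleton {q : ℝ} (h0 : 0 ≤ q) (h1 : q ≤ 1) (x : Bool) :
    (bern q).real {x} = if x = true then q else 1 - q := by
  cases x <;> simp [bern, measureReal_def, h0, h1]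

/-- The number of survivors among `n` independent instances is binomially distributed. -/
lemma pi_bern_real_count {q : ℝ} (h0 : 0 ≤ q) (h1 : q ≤ 1) (n c : ℕ) :
    (Measure.pi fun _ : Fin n => bern q).real
        {η : Fin n → Bool | (Finset.univ.filter fun k => η k = true).card = c}
      = n.choose c * (q ^ c * (1 - q) ^ (n - c)) := by
  have := isProbabilityMeasure_bern h0 h1
  set S : Finset (Fin n → Bool) :=
    Finset.univ.filter fun η => (Finset.univ.filter fun k => η k = true).card = c with hS
  have hset : {η : Fin n → Bool | (Finset.univ.filter fun k => η k = true).card = c} = ↑S := by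
    ext η; simp [hS]
  have hmass : ∀ η ∈ S, (Measure.pi fun _ : Fin n => bern q).real {η}
      = q ^ c * (1 - q) ^ (n - c) := by
    intro η hη
    have hc : (Finset.univ.filter fun k => η k = true).card = c := by simpa [hS] using hη
    have hc' : (Finset.univ.filter fun k => ¬ η k = true).card = n - c := by
      have := Finset.card_filter_add_card_filter_not (s := Finset.univ) (fun k => η k = true)
      rw [Finset.card_univ, Fintype.card_fin] at this
      omega
    rw [measureReal_def, Measure.pi_singleton, ENNReal.toReal_prod]
    simp only [← measureReal_def, bern_real_singleton h0 h1]
    rw [Finset.prod_ite, Finset.prod_const, Finset.prod_const, hc, hc']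
  have hcard : S.card = n.choose c := by
    have h : S.card = (Finset.powersetCard c (Finset.univ : Finset (Fin n))).card := by
      refine Finset.card_bij' (fun η _ => Finset.univ.filter fun k => η k = true)
        (fun s _ k => decide (k ∈ s)) ?_ ?_ ?_ ?_
      · intro η hη
        simpa [hS, Finset.mem_powersetCard] using hη
      · intro s hs
        simpa [hS, Finset.mem_powersetCard] using hs
      · intro η _
        ext k
        simp
      · intro s _
        ext k
        simp
    simpa using h
  rw [hset, ← sum_measureReal_singleton, Finset.sum_congr rfl hmass, Finset.sum_const, hcard,
    nsmul_eq_mul]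

lemma pi_bern_real_inClass {q : ℝ} (h0 : 0 ≤ q) (h1 : q ≤ 1) (n : ℕ) (b : Fin 3) :
    (Measure.pi fun _ : Fin n => bern q).real
        {η : Fin n → Bool | inClass b (Finset.univ.filter fun k => η k = true).card}
      = fProb q b n := by
  have := isProbabilityMeasure_bern h0 h1
  have e0 := pi_bern_real_count h0 h1 n 0
  have e1 := pi_bern_real_count h0 h1 n 1
  fin_cases b
  · simpa [inClass, fProb] using e0
  · simpa [inClass, fProb, mul_assoc] using e1
  · have hset : {η : Fin n → Bool | 2 ≤ (Finset.univ.filter fun k => η k = true).card}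
        = ({η : Fin n → Bool | (Finset.univ.filter fun k => η k = true).card = 0} ∪
          {η : Fin n → Bool | (Finset.univ.filter fun k => η k = true).card = 1})ᶜ := by
      ext η
      simp only [Set.mem_ofPred_eq, Set.mem_compl_iff, Set.mem_union]
      omega
    have hdisj : Disjoint
        {η : Fin n → Bool | (Finset.univ.filter fun k => η k = true).card = 0}
        {η : Fin n → Bool | (Finset.univ.filter fun k => η k = true).card = 1} := by
      rw [Set.disjoint_left]
      intro η h h'
      simp only [Set.mem_ofPred_eq] at h h'
      omega
    have hF : fProb q 2 n = 1 - (1 - q) ^ n - (n : ℝ) * q * (1 - q) ^ (n - 1) := by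
      simp [fProb]
    have hC : ∀ c, inClass 2 c ↔ 2 ≤ c := by simp [inClass]
    change (Measure.pi fun _ : Fin n => bern q).real
        {η : Fin n → Bool | inClass 2 (Finset.univ.filter fun k => η k = true).card}
      = fProb q 2 n
    simp only [hC]
    rw [hset, probReal_compl_eq_one_sub (Set.toFinite _).measurableSet,
      measureReal_union hdisj (Set.toFinite _).measurableSet, e0, e1, hF]
    simp
    ring

/-- Events depending on the tiers separately are independent across tiers. -/
lemma pi_bern_tiers {q : ℝ} (h0 : 0 ≤ q) (h1 : q ≤ 1) {m : ℕ} (n : Fin m → ℕ)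
    (A : ∀ i, Set (Fin (n i) → Bool)) :
    (Measure.pi fun _ : (Σ i : Fin m, Fin (n i)) => bern q)
        {ω : (Σ i : Fin m, Fin (n i)) → Bool | ∀ i, (fun k => ω ⟨i, k⟩) ∈ A i}
      = ∏ i, (Measure.pi fun _ : Fin (n i) => bern q) (A i) := by
  have := isProbabilityMeasure_bern h0 h1
  have h := Measure.infinitePi_map_piCurry (ι := Fin m) (κ := fun i => Fin (n i))
    (X := fun _ _ => Bool) (fun _ _ => bern q)
  simp only [Measure.infinitePi_eq_pi] at h
  rw [← Measure.pi_pi, ← h, MeasurableEquiv.map_apply]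
  congr 1
  ext ω
  simp only [Set.mem_preimage, Set.mem_univ_pi, MeasurableEquiv.coe_piCurry]
  rfl


/-- The probabilities `p_{b₁,…,b_m}` with some `b i ≠ 0` of the VIRTUALIZED server
pattern (Theorem 4): under the mixture `ν = p • μ + (1-p) • δ₀` on
`(Σ i : Fin m, Fin (n i)) → Bool`, with `μ` having independent Bernoulli(`pVM`)
coordinates and `δ₀` Dirac at all-false, the probability that for every tier `i` the
number of operational instances falls in class `b i` is `p * ∏ i, f (b i) (n i)`. -/
theorem virtualized_class_probability (m : ℕ) (hm : 1 ≤ m)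
    (n : Fin m → ℕ) (hn : ∀ i, 1 ≤ n i) (p pVM : ℝ)
    (hp0 : 0 ≤ p) (hp1 : p ≤ 1) (hv0 : 0 ≤ pVM) (hv1 : pVM ≤ 1)
    (b : Fin m → Fin 3) (hb : ∃ i, b i ≠ 0) :
    (ENNReal.ofReal p • (Measure.pi fun _ : (Σ i : Fin m, Fin (n i)) => bern pVM)
        + ENNReal.ofReal (1 - p) •
            Measure.dirac (fun _ : (Σ i : Fin m, Fin (n i)) => false))
      {ω : (Σ i : Fin m, Fin (n i)) → Bool | ∀ i : Fin m,
          inClass (b i) (Finset.univ.filter fun k : Fin (n i) => ω ⟨i, k⟩ = true).card}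
      = ENNReal.ofReal (p * ∏ i : Fin m, fProb pVM (b i) (n i)) := by
  have := isProbabilityMeasure_bern hv0 hv1
  have hμ : (Measure.pi fun _ : (Σ i : Fin m, Fin (n i)) => bern pVM)
      {ω : (Σ i : Fin m, Fin (n i)) → Bool | ∀ i : Fin m,
          inClass (b i) (Finset.univ.filter fun k : Fin (n i) => ω ⟨i, k⟩ = true).card}
      = ENNReal.ofReal (∏ i : Fin m, fProb pVM (b i) (n i)) := by
    have h := pi_bern_tiers hv0 hv1 n fun i =>
      {η : Fin (n i) → Bool | inClass (b i) (Finset.univ.filter fun k => η k = true).card}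
    simp only [Set.mem_ofPred_eq] at h
    rw [h, ENNReal.ofReal_prod_of_nonneg
      fun i _ => pi_bern_real_inClass hv0 hv1 (n i) (b i) ▸ measureReal_nonneg]
    refine Finset.prod_congr rfl fun i _ => ?_
    rw [← pi_bern_real_inClass hv0 hv1, ofReal_measureReal]
  obtain ⟨i, hi⟩ := hb
  -- The all-false configuration has no survivor in tier `i`, hence lies outside the event.
  have hδ : Measure.dirac (fun _ : (Σ i : Fin m, Fin (n i)) => false)
      {ω : (Σ i : Fin m, Fin (n i)) → Bool | ∀ i : Fin m,
          inClass (b i) (Finset.univ.filter fun k : Fin (n i) => ω ⟨i, k⟩ = true).card} = 0 := by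
    rw [Measure.dirac_apply' _ (Set.toFinite _).measurableSet]
    refine Set.indicator_of_notMem (fun h => ?_) _
    have h' := h i
    simp [inClass, hi] at h'
  rw [Measure.add_apply, Measure.smul_apply, Measure.smul_apply, hμ, hδ, smul_zero, add_zero,
    smul_eq_mul, ENNReal.ofReal_mul hp0]
end

section
/- Let N ≥ 1 and p, p_detect, p_migrate, r, p_VM ∈ ℝ with 0 ≤ p ≤ 1, 0 ≤ p_detect ≤ 1, 0 ≤ p_migrate ≤ 1, 0 ≤ r < 1 and 0 ≤ p_VM ≤ 1, and set q = p_migrate·p_VM/(1 - (1-p_migrate)·r). Let μ_{p_VM} and μ_q be the product probability measures on Fin N → Bool all of whose marginals assign probability p_VM, respectively q, to true, let δ₀ be the Dirac measure at the all-false function, and let ν = p • μ_{p_VM} + (1-p)·p_detect • μ_q + (1-p)·(1-p_detect) • δ₀. Then ν {ω | ∀ k, ω k = false} = p·(1-p_VM)^N + (1-p)·p_detect·( ((1-p_migrate)·(1-r) + p_migrate·(1-p_VM)) / (1 - (1-p_migrate)·r) )^N + (1-p)·(1-p_detect). (The all-instances-lost probability p_{0,0,…,0} of the VIRTUALIZED-M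 server pattern in Theorem 4, where N is the total number of tier instances.) -/
/-!
The event that every instance is lost is the singleton of the all-false configuration. A product
measure gives it the product of the marginal masses of `false`, namely `(1 - a) ^ N`
(`pi_bern_all_false`), and the Dirac branch gives it mass `1`. The mixture weights are nonnegative,
so the `ENNReal.ofReal` terms combine into one, and the claim reduces to the identity
`1 - q = ((1 - pMigrate) (1 - r) + pMigrate (1 - pVM)) / (1 - (1 - pMigrate) r)`. Its denominator is
positive because `(1 - pMigrate) r ≤ r < 1`, and its numerator is visibly nonnegative, so `q ≤ 1`.
-/

open MeasureTheory

theorem bern_false (a : ℝ) : bern a {false} = ENNReal.ofReal (1 - a) := by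
  simp [bern]

theorem pi_bern_all_false (N : ℕ) (a : ℝ) (ha : a ≤ 1) :
    (Measure.pi fun _ : Fin N => bern a) {ω : Fin N → Bool | ∀ k, ω k = false}
      = ENNReal.ofReal ((1 - a) ^ N) := by
  have hset : {ω : Fin N → Bool | ∀ k, ω k = false}
      = Set.pi Set.univ (fun _ : Fin N => {false}) := by
    ext ω
    simp
  rw [hset, Measure.pi_pi]
  simp [bern_false, ENNReal.ofReal_pow (sub_nonneg.mpr ha)]

/-- All-instances-lost probability `p_{0,…,0}` of the VIRTUALIZED-M server pattern
(Theorem 4): under the three-branch mixture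
`ν = p • μ_{p_VM} + (1-p) p_detect • μ_q + (1-p)(1-p_detect) • δ₀`, with
`q = p_migrate p_VM / (1 - (1-p_migrate) r)`, the probability that all `N` tier
instances are lost is
`p (1-p_VM)^N + (1-p) p_detect (((1-p_migrate)(1-r) + p_migrate(1-p_VM))/(1-(1-p_migrate)r))^N + (1-p)(1-p_detect)`. -/
theorem virtualized_m_all_lost (N : ℕ) (hN : 1 ≤ N)
    (p pDetect pMigrate r pVM : ℝ)
    (hp0 : 0 ≤ p) (hp1 : p ≤ 1) (hd0 : 0 ≤ pDetect) (hd1 : pDetect ≤ 1)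
    (hm0 : 0 ≤ pMigrate) (hm1 : pMigrate ≤ 1) (hr0 : 0 ≤ r) (hr1 : r < 1)
    (hv0 : 0 ≤ pVM) (hv1 : pVM ≤ 1)
    (q : ℝ) (hq : q = pMigrate * pVM / (1 - (1 - pMigrate) * r)) :
    (ENNReal.ofReal p • (Measure.pi fun _ : Fin N => bern pVM)
        + ENNReal.ofReal ((1 - p) * pDetect) • (Measure.pi fun _ : Fin N => bern q)
        + ENNReal.ofReal ((1 - p) * (1 - pDetect)) •
            Measure.dirac (fun _ : Fin N => false))
      {ω : Fin N → Bool | ∀ k, ω k = false}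
      = ENNReal.ofReal (p * (1 - pVM) ^ N
          + (1 - p) * pDetect *
              (((1 - pMigrate) * (1 - r) + pMigrate * (1 - pVM))
                / (1 - (1 - pMigrate) * r)) ^ N
          + (1 - p) * (1 - pDetect)) := by
  have hD : 0 < 1 - (1 - pMigrate) * r := by nlinarith
  have hq1 : ((1 - pMigrate) * (1 - r) + pMigrate * (1 - pVM)) / (1 - (1 - pMigrate) * r)
      = 1 - q := by
    rw [hq, eq_sub_iff_add_eq, ← add_div, div_eq_one_iff_eq hD.ne']
    ring
  have hq2 : 0 ≤ 1 - q := by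
    rw [← hq1]
    exact div_nonneg (add_nonneg (mul_nonneg (by linarith) (by linarith))
      (mul_nonneg hm0 (by linarith))) hD.le
  have hw : 0 ≤ (1 - p) * pDetect := mul_nonneg (by linarith) hd0
  have hw' : 0 ≤ (1 - p) * (1 - pDetect) := mul_nonneg (by linarith) (by linarith)
  have hA : 0 ≤ p * (1 - pVM) ^ N := mul_nonneg hp0 (pow_nonneg (by linarith) N)
  have hB : 0 ≤ (1 - p) * pDetect * (1 - q) ^ N := mul_nonneg hw (pow_nonneg hq2 N)
  have hdirac : Measure.dirac (fun _ : Fin N => false)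
      {ω : Fin N → Bool | ∀ k, ω k = false} = 1 :=
    Measure.dirac_apply_of_mem (fun _ => rfl)
  rw [hq1, ENNReal.ofReal_add (add_nonneg hA hB) hw', ENNReal.ofReal_add hA hB,
    ENNReal.ofReal_mul hp0, ENNReal.ofReal_mul hw]
  simp only [Measure.add_apply, Measure.smul_apply, smul_eq_mul, hdirac, mul_one,
    pi_bern_all_false N pVM hv1, pi_bern_all_false N q (sub_nonneg.mp hq2)]
end

section
/- Let m ≥ 1, n : Fin m → ℕ with n i ≥ 1 for all i, and p, p_detect, p_migrate, r, p_VM ∈ ℝ with 0 ≤ p ≤ 1, 0 ≤ p_detect ≤ 1, 0 ≤ p_migrate ≤ 1, 0 ≤ r < 1 and 0 ≤ p_VM ≤ 1, and set q = p_migrate·p_VM/(1 - (1-p_migrate)·r). On the index type ι = Σ (i : Fin m), Fin (n i), let μ_{p_VM} and μ_q be the product probability measures all of whose marginals assign probability p_VM, respectively q, to true, let δ₀ be the Dirac measure at the all-false function, and let ν = p • μ_{p_VM} + (1-p)·p_detect • μ_q + (1-p)·(1-p_detect) • δ₀. For ω : ι → Bool let count_i(ω) be the number of k with ω ⟨i,k⟩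 = true, let b : Fin m → Fin 3 encode a class for each tier (b i = 0 meaning count_i = 0, b i = 1 meaning count_i = 1, b i = 2 meaning count_i ≥ 2), and suppose b i ≠ 0 for at least one i. Then ν {ω | ∀ i, count_i(ω) is in class b i} = p · ∏_i f(b i, n i) + (1-p)·p_detect · ∏_i g(b i, n i), where f(0,n) = (1-p_VM)^n, f(1,n) = n·p_VM·(1-p_VM)^{n-1}, f(2,n) = 1 - f(0,n) - f(1,n), g(0,n) = (1-q)^n, g(1,n) = n·q·(1-q)^{n-1}, and g(2,n) = 1 - g(0,n) - g(1,n). (The probabilities p_{b₁,…,b_m} with some b_i ≠ 0 of the VIRTUALIZED-M server pattern in Theorem 4.) -/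
/-!
On a finite index set, the product Bernoulli measure of an event is the sum over its outcomes `ω` of
`∏ x, bernWeight a (ω x)`. Currying `ω` along `Σ i, Fin (n i)` and noting that the
event is a conjunction of one condition per tier, distributivity of products over sums factors this
sum into one factor per tier (`pi_bern_classEvent`). Each factor is a binomial sum: grouping the
outcomes of a tier by their number `c` of operational instances gives `∑ c, C(n, c) a ^ c (1 - a) ^
(n - c)` over the class, which is the first term, the second term, or the rest of the expansion of
`(a + (1 - a)) ^ n = 1` (`sum_inClass_eq_classProb`). The Dirac part of the mixture contributes
nothing, since the all-false outcome has every count zero while some class is nonzero.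
-/

open MeasureTheory

/-- The probability that the number of survivors among `n` independent Bernoulli(`a`)
instances falls in class `b` (this is `f(b,n)` for `a = p_VM` and `g(b,n)` for
`a = q`). -/
noncomputable def classProb (a : ℝ) (b : Fin 3) (n : ℕ) : ℝ :=
  if b = 0 then (1 - a) ^ n
  else if b = 1 then (n : ℝ) * a * (1 - a) ^ (n - 1)
  else 1 - (1 - a) ^ n - (n : ℝ) * a * (1 - a) ^ (n - 1)

/-- The mass that `bern a` puts on a single outcome, as a real number. -/
noncomputable def bernWeight (a : ℝ) (x : Bool) : ℝ := if x then a else 1 - a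

lemma bernWeight_nonneg {a : ℝ} (h0 : 0 ≤ a) (h1 : a ≤ 1) (x : Bool) : 0 ≤ bernWeight a x := by
  cases x <;> simp [bernWeight, h0, h1]

lemma bern_singleton (a : ℝ) (x : Bool) : bern a {x} = ENNReal.ofReal (bernWeight a x) := by
  cases x <;> simp [bern, bernWeight]

lemma pi_bern_apply {ι : Type*} [Fintype ι] [DecidableEq ι] {a : ℝ} (h0 : 0 ≤ a) (h1 : a ≤ 1)
    (S : Set (ι → Bool)) [DecidablePred (· ∈ S)] :
    (Measure.pi fun _ : ι => bern a) S
      = ENNReal.ofReal (∑ ω : ι → Bool, if ω ∈ S then ∏ x, bernWeight a (ω x) else 0) := by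
  have hS : S = ((Finset.univ.filter fun ω => ω ∈ S : Finset (ι → Bool)) : Set (ι → Bool)) := by
    ext; simp
  rw [← Finset.sum_filter, ENNReal.ofReal_sum_of_nonneg
    fun ω _ => Finset.prod_nonneg fun x _ => bernWeight_nonneg h0 h1 _]
  conv_lhs => rw [hS]
  rw [← sum_measure_singleton]
  refine Finset.sum_congr rfl fun ω _ => ?_
  rw [Measure.pi_singleton, ENNReal.ofReal_prod_of_nonneg fun x _ => bernWeight_nonneg h0 h1 _]
  simp only [bern_singleton]

open scoped Classical in
/-- Outcomes of one tier, identified with the set of operational instances, grouped by its size. -/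
lemma sum_inClass_eq_sum_range (a : ℝ) (b : Fin 3) (n : ℕ) :
    (∑ η : Fin n → Bool,
        if inClass b (Finset.univ.filter fun k => η k = true).card
          then ∏ k, bernWeight a (η k) else 0)
      = ∑ c ∈ Finset.range (n + 1),
          if inClass b c then a ^ c * (1 - a) ^ (n - c) * (n.choose c : ℝ) else 0 := by
  have key := Finset.sum_powerset_apply_card
    (fun c => if inClass b c then a ^ c * (1 - a) ^ (n - c) else 0)
    (x := (Finset.univ : Finset (Fin n)))
  rw [Finset.card_univ, Fintype.card_fin, Finset.powerset_univ] at key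
  trans ∑ s : Finset (Fin n), if inClass b s.card then a ^ s.card * (1 - a) ^ (n - s.card) else 0
  · refine Finset.sum_bij' (fun η _ => Finset.univ.filter fun k => η k = true)
      (fun s _ k => decide (k ∈ s)) (by simp) (by simp) (by simp) (by simp) ?_
    intro η _
    congr 1
    simp only [bernWeight]
    rw [Finset.prod_ite, Finset.prod_const, Finset.prod_const, Finset.filter_not,
      Finset.card_sdiff_of_subset (Finset.filter_subset _ _), Finset.card_univ, Fintype.card_fin]
  · rw [key]
    refine Finset.sum_congr rfl fun c _ => ?_
    split_ifs <;> simp [mul_comm]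

open scoped Classical in
lemma sum_inClass_eq_classProb (a : ℝ) (b : Fin 3) {n : ℕ} (hn : 1 ≤ n) :
    (∑ η : Fin n → Bool,
        if inClass b (Finset.univ.filter fun k => η k = true).card
          then ∏ k, bernWeight a (η k) else 0) = classProb a b n := by
  rw [sum_inClass_eq_sum_range]
  obtain ⟨n, rfl⟩ := Nat.exists_eq_add_of_le' hn
  have hbinom := add_pow a (1 - a) (n + 1)
  rw [add_sub_cancel, one_pow, Finset.sum_range_succ', Finset.sum_range_succ'] at hbinom
  rw [Finset.sum_range_succ', Finset.sum_range_succ']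
  fin_cases b
  · simp [inClass, classProb]
  · simp [inClass, classProb]; ring
  · simp [inClass, classProb] at hbinom ⊢
    linarith

/-- Independence across tiers: the probability of the class event is a product over the tiers. -/
lemma pi_bern_classEvent {m : ℕ} {n : Fin m → ℕ} (hn : ∀ i, 1 ≤ n i) (b : Fin m → Fin 3)
    {a : ℝ} (h0 : 0 ≤ a) (h1 : a ≤ 1) :
    (Measure.pi fun _ : (Σ i : Fin m, Fin (n i)) => bern a)
      {ω : (Σ i : Fin m, Fin (n i)) → Bool | ∀ i : Fin m,
          inClass (b i) (Finset.univ.filter fun k : Fin (n i) => ω ⟨i, k⟩ = true).card}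
      = ENNReal.ofReal (∏ i : Fin m, classProb a (b i) (n i)) := by
  classical
  rw [pi_bern_apply h0 h1]
  congr 1
  rw [Finset.prod_congr rfl fun i _ => (sum_inClass_eq_classProb a (b i) (hn i)).symm]
  rw [Finset.prod_univ_sum, Fintype.piFinset_univ]
  let e : ((Σ i : Fin m, Fin (n i)) → Bool) ≃ (∀ i : Fin m, Fin (n i) → Bool) :=
    Equiv.piCurry fun _ _ => Bool
  refine Fintype.sum_equiv e _ _ fun ω => ?_
  rw [Finset.prod_ite_zero, Fintype.prod_sigma]
  simp [e, Equiv.piCurry, Sigma.curry]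

lemma classProb_nonneg {a : ℝ} (h0 : 0 ≤ a) (h1 : a ≤ 1) (b : Fin 3) {n : ℕ} (hn : 1 ≤ n) :
    0 ≤ classProb a b n := by
  classical
  rw [← sum_inClass_eq_classProb a b hn]
  refine Finset.sum_nonneg fun η _ => ?_
  split_ifs
  · exact Finset.prod_nonneg fun k _ => bernWeight_nonneg h0 h1 _
  · exact le_rfl

/-- The probabilities `p_{b₁,…,b_m}` with some `b i ≠ 0` of the VIRTUALIZED-M server
pattern (Theorem 4): under the three-branch mixture
`ν = p • μ_{p_VM} + (1-p) p_detect • μ_q + (1-p)(1-p_detect) • δ₀` on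
`(Σ i : Fin m, Fin (n i)) → Bool`, with `q = p_migrate p_VM / (1-(1-p_migrate) r)`,
the probability that for every tier `i` the number of operational instances falls in
class `b i` is `p * ∏ i, f (b i) (n i) + (1-p) p_detect * ∏ i, g (b i) (n i)`. -/
theorem virtualized_m_class_probability (m : ℕ) (hm : 1 ≤ m)
    (n : Fin m → ℕ) (hn : ∀ i, 1 ≤ n i)
    (p pDetect pMigrate r pVM : ℝ)
    (hp0 : 0 ≤ p) (hp1 : p ≤ 1) (hd0 : 0 ≤ pDetect) (hd1 : pDetect ≤ 1)
    (hmg0 : 0 ≤ pMigrate) (hmg1 : pMigrate ≤ 1) (hr0 : 0 ≤ r) (hr1 : r < 1)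
    (hv0 : 0 ≤ pVM) (hv1 : pVM ≤ 1)
    (q : ℝ) (hq : q = pMigrate * pVM / (1 - (1 - pMigrate) * r))
    (b : Fin m → Fin 3) (hb : ∃ i, b i ≠ 0) :
    (ENNReal.ofReal p • (Measure.pi fun _ : (Σ i : Fin m, Fin (n i)) => bern pVM)
        + ENNReal.ofReal ((1 - p) * pDetect) •
            (Measure.pi fun _ : (Σ i : Fin m, Fin (n i)) => bern q)
        + ENNReal.ofReal ((1 - p) * (1 - pDetect)) •
            Measure.dirac (fun _ : (Σ i : Fin m, Fin (n i)) => false))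
      {ω : (Σ i : Fin m, Fin (n i)) → Bool | ∀ i : Fin m,
          inClass (b i) (Finset.univ.filter fun k : Fin (n i) => ω ⟨i, k⟩ = true).card}
      = ENNReal.ofReal (p * ∏ i : Fin m, classProb pVM (b i) (n i)
          + (1 - p) * pDetect * ∏ i : Fin m, classProb q (b i) (n i)) := by
  have hnum : 0 ≤ pMigrate * pVM := mul_nonneg hmg0 hv0
  -- The case `pMigrate = 0` is included: the denominator is at least `1 - r > 0`.
  have hden : 0 < 1 - (1 - pMigrate) * r := by nlinarith
  have hq0 : 0 ≤ q := hq ▸ div_nonneg hnum hden.le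
  have hq1 : q ≤ 1 := by
    rw [hq, div_le_one hden]
    nlinarith
  have hdirac : (fun _ : (Σ i : Fin m, Fin (n i)) => false) ∉
      {ω : (Σ i : Fin m, Fin (n i)) → Bool | ∀ i : Fin m,
          inClass (b i) (Finset.univ.filter fun k : Fin (n i) => ω ⟨i, k⟩ = true).card} := by
    obtain ⟨i, hi⟩ := hb
    intro h
    have := h i
    simp [inClass, hi] at this
  have hpd : 0 ≤ (1 - p) * pDetect := mul_nonneg (sub_nonneg.2 hp1) hd0
  have hf : 0 ≤ ∏ i : Fin m, classProb pVM (b i) (n i) :=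
    Finset.prod_nonneg fun i _ => classProb_nonneg hv0 hv1 _ (hn i)
  have hg : 0 ≤ ∏ i : Fin m, classProb q (b i) (n i) :=
    Finset.prod_nonneg fun i _ => classProb_nonneg hq0 hq1 _ (hn i)
  rw [Measure.add_apply, Measure.add_apply, Measure.smul_apply, Measure.smul_apply,
    Measure.smul_apply, pi_bern_classEvent hn b hv0 hv1, pi_bern_classEvent hn b hq0 hq1,
    Measure.dirac_apply, Set.indicator_of_notMem hdirac, smul_zero, add_zero, smul_eq_mul,
    smul_eq_mul, ← ENNReal.ofReal_mul hp0, ← ENNReal.ofReal_mul hpd,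
    ← ENNReal.ofReal_add (mul_nonneg hp0 hf) (mul_nonneg hpd hg)]
end
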